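/- Let u, v ∈ (ℚ \ ℤ)² with u ≢ ±v (mod ℤ²). Then for all τ in the upper half-plane, (f_u(τ) − f_v(τ))⁶ = j(τ)²(j(τ)−1728)³ / (2³⁰·3²⁴) · g_{u+v}(τ)⁶ g_{u−v}(τ)⁶ / (g_u(τ)¹² g_v(τ)¹²). -/

import Mathlib

noncomputable section

open Complex

/-- `e(z) = exp(2πiz)`. -/
def ec (z : ℂ) : ℂ := Complex.exp (2 * Real.pi * Complex.I * z)

/-- The Weierstrass ℘-function of the lattice `ℤτ + ℤ`. -/
def wp (τ z : ℂ) : ℂ :=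
  z⁻¹ ^ 2 + ∑' p : ℤ × ℤ,
    if p = 0 then 0
    else ((z - ((p.1 : ℂ) * τ + (p.2 : ℂ)))⁻¹ ^ 2 - ((p.1 : ℂ) * τ + (p.2 : ℂ))⁻¹ ^ 2)

/-- The lattice invariant `g₂` of `ℤτ + ℤ`. -/
def g2 (τ : ℂ) : ℂ := 60 * ∑' p : ℤ × ℤ, if p = 0 then 0 else ((p.1 : ℂ) * τ + (p.2 : ℂ))⁻¹ ^ 4

/-- The lattice invariant `g₃` of `ℤτ + ℤ`. -/
def g3 (τ : ℂ) : ℂ := 140 * ∑' p : ℤ × ℤ, if p = 0 then 0 else ((p.1 : ℂ) * τ + (p.2 : ℂ))⁻¹ ^ 6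

/-- The discriminant `Δ = g₂³ − 27 g₃²`. -/
def disc (τ : ℂ) : ℂ := g2 τ ^ 3 - 27 * g3 τ ^ 2

/-- The modular `j`-invariant `j = 1728 g₂³/Δ`. -/
def jInv (τ : ℂ) : ℂ := 1728 * g2 τ ^ 3 / disc τ

/-- The (first) Fricke function `f_v(τ) = (g₂g₃/Δ)·℘(r₁τ + r₂)`. -/
def fricke (v : ℚ × ℚ) (τ : ℂ) : ℂ :=
  g2 τ * g3 τ / disc τ * wp τ ((v.1 : ℂ) * τ + (v.2 : ℂ))

/-- `q^r = exp(2πirτ)` for rational exponents `r`. -/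
def qpow (τ : ℂ) (r : ℚ) : ℂ := Complex.exp (2 * Real.pi * Complex.I * (r : ℂ) * τ)

/-- The Siegel function `g_v(τ)`. -/
def siegel (v : ℚ × ℚ) (τ : ℂ) : ℂ :=
  -Complex.exp (Real.pi * Complex.I * (v.2 : ℂ) * ((v.1 : ℂ) - 1)) *
    qpow τ ((1/2) * (v.1 ^ 2 - v.1 + 1/6)) *
    (1 - qpow τ v.1 * ec (v.2 : ℂ)) *
    ∏' n : ℕ,
      ((1 - qpow τ ((n : ℚ) + 1 + v.1) * ec (v.2 : ℂ)) *
       (1 - qpow τ ((n : ℚ) + 1 - v.1) * ec (-(v.2 : ℂ))))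

/-- A rational number is integral if it is (the image of) an integer. -/
def IsIntegralRat (r : ℚ) : Prop := ∃ n : ℤ, r = n

/-- `u ≡ v (mod ℤ²)`. -/
def CongModZ2 (u v : ℚ × ℚ) : Prop := IsIntegralRat (u.1 - v.1) ∧ IsIntegralRat (u.2 - v.2)

/-!
By Liouville, an even elliptic function with at most double poles, all at lattice points, is
`c ℘ + c'`. Applied to `z ↦ θ(z + w) θ(z - w) / θ(z)²`, which vanishes at `w`, this factors
`℘(z) - ℘(w)` into theta values. A Siegel function is an elementary exponential times a theta value,
and the exponentials combine to give
`℘(u) - ℘(v) = (2π)² η⁴ g_{u+v} g_{u-v} / (g_u² g_v²)`.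
Taking sixth powers, `(2π)¹² η²⁴ = Δ`, while `j² (j - 1728)³ = 2³⁰ 3²⁴ (g₂ g₃)⁶ / Δ⁵`.
-/

section EllipticFunctions

open Filter Topology Asymptotics

lemma deriv_zero_of_even {𝕜 E : Type*} [NontriviallyNormedField 𝕜] [NormedAddCommGroup E]
    [NormedSpace 𝕜 E] [IsAddTorsionFree E] {f : 𝕜 → E} (hf : f.Even) : deriv f 0 = 0 := by
  have h : deriv f 0 = -deriv f 0 := by
    simpa [funext hf] using deriv_comp_neg f 0
  exact self_eq_neg.mp h

variable {E : Type*} [NormedAddCommGroup E] [NormedSpace ℂ E] [CompleteSpace E]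

-- `z² f(z)` extends to an even holomorphic function, so it vanishes to second order at `0`.
lemma isLittleO_inv_of_even_of_tendsto_sq_smul {f : ℂ → E} (hf : f.Even)
    (hd : ∀ᶠ z in 𝓝[≠] 0, DifferentiableAt ℂ f z)
    (h : Tendsto (fun z ↦ z ^ 2 • f z) (𝓝[≠] 0) (𝓝 0)) :
    f =o[𝓝[≠] 0] fun z ↦ z⁻¹ := by
  set F : ℂ → E := fun z ↦ z ^ 2 • f z with hF
  have hF0 : F 0 = 0 := by simp [hF]
  have hFeven : F.Even := fun z ↦ by simp [hF, hf z]
  have hFcont : ContinuousAt F 0 :=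
    continuousWithinAt_compl_self.mp (by simpa [ContinuousWithinAt, hF0] using h)
  have hFdiff : DifferentiableAt ℂ F 0 :=
    (Complex.analyticAt_of_differentiable_on_punctured_nhds_of_continuousAt
      (hd.mono fun z hz ↦ (differentiableAt_pow 2).smul hz) hFcont).differentiableAt
  have : IsAddTorsionFree E := .of_isTorsionFree ℂ E
  have hFo : F =o[𝓝[≠] 0] fun z ↦ z := by
    have := hFdiff.hasDerivAt.isLittleO
    rw [deriv_zero_of_even hFeven] at this
    simpa [hF0] using this.mono nhdsWithin_le_nhds
  refine ((isBigO_refl (fun z : ℂ ↦ (z ^ 2)⁻¹) _).smul_isLittleO hFo).congr' ?_ ?_ <;>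
    filter_upwards [self_mem_nhdsWithin] with z (hz : z ≠ 0)
  · simp [hF, hz]
  · rw [smul_eq_mul]
    field_simp

variable (L : PeriodPair)

lemma apply_eq_apply_of_periodic_of_isLittleO_inv {f : ℂ → E} (hper : ∀ l ∈ L.lattice, f.Periodic l)
    (hd : DifferentiableOn ℂ f (L.lattice : Set ℂ)ᶜ) (ho : f =o[𝓝[≠] 0] fun z ↦ z⁻¹)
    {z w : ℂ} (hz : z ∉ L.lattice) (hw : w ∉ L.lattice) : f z = f w := by
  classical
  let b := limUnder (𝓝[≠] 0) f
  let g : ℂ → E := fun z ↦ if z ∈ L.lattice then b else f z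
  have hgf : ∀ {z}, z ∉ L.lattice → g z = f z := fun hz ↦ if_neg hz
  have hgper : ∀ l ∈ L.lattice, g.Periodic l := fun l hl z ↦ by
    simp only [g, L.lattice.add_mem_iff_left hl, hper l hl z]
  have hg0 : DifferentiableAt ℂ g 0 := by
    have hs := L.compl_lattice_sdiff_singleton_mem_nhds 0
    have hsub : (↑L.lattice \ {0} : Set ℂ)ᶜ \ {0} ⊆ (L.lattice : Set ℂ)ᶜ :=
      fun z hz hzL ↦ hz.1 ⟨hzL, hz.2⟩
    have ho' : (fun z ↦ f z - f 0) =o[𝓝[≠] 0] fun z ↦ (z - 0)⁻¹ := by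
      simpa using ho.sub <| isLittleO_const_left.mpr <| .inr <|
        tendsto_norm_cobounded_atTop.comp tendsto_inv₀_nhdsNE_zero
    refine ((Complex.differentiableOn_update_limUnder_of_isLittleO hs (hd.mono hsub)
      ho').differentiableAt hs).congr_of_eventuallyEq ?_
    filter_upwards [hs] with z hz
    by_cases hz0 : z = 0
    · simp [g, b, hz0]
    · rw [hgf (hsub ⟨hz, hz0⟩), Function.update_of_ne hz0]
  have hgdiff : Differentiable ℂ g := fun x ↦ by
    by_cases hx : x ∈ L.lattice
    · have hshift : g = fun y ↦ g (y - x) := funext fun y ↦ ((hgper x hx).sub_eq y).symm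
      rw [hshift]
      exact DifferentiableAt.comp (g := g) x (by rwa [sub_self]) (by fun_prop)
    · have hs := L.isClosed_lattice.isOpen_compl.mem_nhds hx
      exact (hd.differentiableAt hs).congr_of_eventuallyEq (mem_of_superset hs fun _ ↦ hgf)
  have hgbdd := (IsZLattice.isCompact_range_of_periodic L.lattice g hgdiff.continuous
    fun z l hl ↦ hgper l hl z).isBounded
  rw [← hgf hz, ← hgf hw, hgdiff.apply_eq_apply_of_bounded hgbdd z w]

lemma tendsto_sq_mul_weierstrassP :
    Tendsto (fun z ↦ z ^ 2 * L.weierstrassP z) (𝓝[≠] 0) (𝓝 1) := by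
  have h : Tendsto (fun z ↦ z ^ 2 * L.weierstrassPExcept 0 z + 1) (𝓝 0) (𝓝 1) := by
    have := (L.analyticAt_weierstrassPExcept 0).continuousAt
    simpa using (show ContinuousAt (fun z ↦ z ^ 2 * L.weierstrassPExcept 0 z + 1) 0 by
      fun_prop).tendsto
  refine (h.mono_left nhdsWithin_le_nhds).congr' ?_
  filter_upwards [self_mem_nhdsWithin] with z (hz : z ≠ 0)
  simpa [hz] using (L.ite_eq_one_sub_sq_mul_weierstrassP 0 (zero_mem _) z).symm

theorem sub_eq_mul_weierstrassP_sub {f : ℂ → ℂ} {c : ℂ} (heven : f.Even)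
    (hper : ∀ l ∈ L.lattice, f.Periodic l) (hd : DifferentiableOn ℂ f (L.lattice : Set ℂ)ᶜ)
    (hc : Tendsto (fun z ↦ z ^ 2 * f z) (𝓝[≠] 0) (𝓝 c)) {z w : ℂ}
    (hz : z ∉ L.lattice) (hw : w ∉ L.lattice) :
    f z - f w = c * (L.weierstrassP z - L.weierstrassP w) := by
  let g : ℂ → ℂ := fun z ↦ f z - c * L.weierstrassP z
  have hgd : DifferentiableOn ℂ g (L.lattice : Set ℂ)ᶜ :=
    hd.sub (L.differentiableOn_weierstrassP.const_mul c)
  have hgper : ∀ l ∈ L.lattice, g.Periodic l := fun l hl z ↦ by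
    simp only [g, hper l hl z, L.periodic_weierstrassP ⟨l, hl⟩ z]
  have hgo : g =o[𝓝[≠] 0] fun z ↦ z⁻¹ := by
    refine isLittleO_inv_of_even_of_tendsto_sq_smul (fun z ↦ by simp [g, heven z]) ?_ ?_
    · filter_upwards [mem_nhdsWithin_of_mem_nhds (L.compl_lattice_sdiff_singleton_mem_nhds 0),
        self_mem_nhdsWithin] with z hz hz0
      exact hgd.differentiableAt <| L.isClosed_lattice.isOpen_compl.mem_nhds
        fun hzL ↦ hz ⟨hzL, hz0⟩
    · have := hc.sub ((tendsto_sq_mul_weierstrassP L).const_mul c)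
      rw [mul_one, sub_self] at this
      exact this.congr fun z ↦ by simp only [g, smul_eq_mul]; ring
  linear_combination apply_eq_apply_of_periodic_of_isLittleO_inv L hgper hgd hgo hz hw

end EllipticFunctions

section QPochhammer

/-- The `q`-Pochhammer symbol `(x; q)_∞ = ∏_{n ≥ 0} (1 - qⁿ x)`, the building block of the theta
function and of the Siegel functions. The product converges for `‖q‖ < 1`. -/
def qPochhammer (q x : ℂ) : ℂ := ∏' n : ℕ, (1 - q ^ n * x)

variable {q : ℂ} (hq : ‖q‖ < 1)

include hq

lemma summable_norm_neg_pow_mul (x : ℂ) : Summable fun n : ℕ ↦ ‖-(q ^ n * x)‖ := by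
  simpa using (summable_geometric_of_lt_one (norm_nonneg q) hq).mul_right ‖x‖

lemma multipliable_one_sub_pow_mul (x : ℂ) : Multipliable fun n : ℕ ↦ 1 - q ^ n * x := by
  simpa [sub_eq_add_neg] using multipliable_one_add_of_summable (summable_norm_neg_pow_mul hq x)

lemma qPochhammer_ne_zero {x : ℂ} (hx : ∀ n : ℕ, q ^ n * x ≠ 1) : qPochhammer q x ≠ 0 := by
  simpa [qPochhammer, sub_eq_add_neg] using
    tprod_one_add_ne_zero_of_summable (f := fun n : ℕ ↦ -(q ^ n * x))
      (fun n ↦ by simpa [← sub_eq_add_neg, sub_eq_zero] using (hx n).symm)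
      (summable_norm_neg_pow_mul hq x)

lemma qPochhammer_self_ne_zero : qPochhammer q q ≠ 0 :=
  qPochhammer_ne_zero hq fun n hn ↦ by
    have : ‖q‖ ^ (n + 1) < 1 := pow_lt_one₀ (norm_nonneg q) hq n.succ_ne_zero
    rw [← norm_pow, pow_succ, hn, norm_one] at this
    exact this.false

lemma qPochhammer_eq_one_sub_mul (x : ℂ) : qPochhammer q x = (1 - x) * qPochhammer q (q * x) := by
  have hshift (n : ℕ) : 1 - q ^ n * (q * x) = 1 - q ^ (n + 1) * x := by ring
  have hmul := multipliable_one_sub_pow_mul hq (q * x)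
  simp only [hshift] at hmul
  simp only [qPochhammer, hshift]
  rw [tprod_eq_zero_mul' (f := fun n : ℕ ↦ 1 - q ^ n * x) hmul, pow_zero, one_mul]

lemma differentiable_qPochhammer : Differentiable ℂ (qPochhammer q) := fun x ↦ by
  have hball : IsOpen (Metric.ball (0 : ℂ) (‖x‖ + 1)) := Metric.isOpen_ball
  have hprod := Summable.hasProdLocallyUniformlyOn_nat_one_add
    (f := fun (n : ℕ) (y : ℂ) ↦ -(q ^ n * y)) (u := fun n ↦ ‖q‖ ^ n * (‖x‖ + 1)) hball
    ((summable_geometric_of_lt_one (norm_nonneg _) hq).mul_right _)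
    (.of_forall fun n y hy ↦ by
      have : ‖y‖ ≤ ‖x‖ + 1 := (mem_ball_zero_iff.mp hy).le
      simp only [norm_neg, norm_mul, norm_pow]
      gcongr)
    (fun n ↦ by fun_prop)
  have hdiff := hprod.differentiableOn
    (.of_forall fun _ ↦ by
      simpa [Finset.prod_fn] using DifferentiableOn.finsetProd (fun _ _ ↦ by fun_prop)) hball
  simp only [← sub_eq_add_neg] at hdiff
  exact hdiff.differentiableAt (hball.mem_nhds (by simp))

end QPochhammer

section Ec

lemma ec_zero : ec 0 = 1 := by simp [ec]

lemma ec_one : ec 1 = 1 := by simp [ec]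

lemma ec_ne_zero (z : ℂ) : ec z ≠ 0 := exp_ne_zero _

lemma ec_add (z w : ℂ) : ec (z + w) = ec z * ec w := by
  simp only [ec, mul_add, exp_add]

lemma ec_neg (z : ℂ) : ec (-z) = (ec z)⁻¹ := by
  simp only [ec, mul_neg, exp_neg]

lemma ec_sub (z w : ℂ) : ec (z - w) = ec z / ec w := by
  rw [sub_eq_add_neg, ec_add, ec_neg, div_eq_mul_inv]

lemma ec_natCast_mul (n : ℕ) (z : ℂ) : ec (n * z) = ec z ^ n := by
  rw [ec, ec, ← exp_nat_mul]
  ring_nf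

lemma ec_eq_one_iff {z : ℂ} : ec z = 1 ↔ ∃ n : ℤ, z = n := by
  simp_rw [ec, exp_eq_one_iff, mul_comm _ (2 * Real.pi * I : ℂ), mul_right_inj' two_pi_I_ne_zero]

lemma hasDerivAt_ec (z : ℂ) : HasDerivAt ec (2 * Real.pi * I * ec z) z := by
  unfold ec
  simpa [mul_comm] using ((hasDerivAt_id z).const_mul (2 * Real.pi * I)).cexp

lemma differentiable_ec : Differentiable ℂ ec := fun z ↦ (hasDerivAt_ec z).differentiableAt

lemma norm_ec_lt_one (τ : UpperHalfPlane) : ‖ec τ‖ < 1 :=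
  τ.norm_exp_two_pi_I_lt_one

end Ec

section Lattice

/-- The lattice `ℤτ + ℤ`, with its basis `(τ, 1)`, as a `PeriodPair`. -/
def periodPair (τ : UpperHalfPlane) : PeriodPair where
  ω₁ := τ
  ω₂ := 1
  indep := by
    refine LinearIndependent.pair_iff.mpr fun s t hst ↦ ?_
    have hs : s = 0 := by
      simpa [τ.im_ne_zero] using congrArg Complex.im hst
    exact ⟨hs, by simpa [hs] using hst⟩

lemma wp_eq_weierstrassP (τ : UpperHalfPlane) (z : ℂ) : wp τ z = (periodPair τ).weierstrassP z := by
  set L := periodPair τ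
  have hcoe (p : ℤ × ℤ) : (L.latticeEquivProd.symm p : ℂ) = p.1 * τ + p.2 := by
    rw [PeriodPair.latticeEquiv_symm_apply]
    simp [L, periodPair]
  have hzero (p : ℤ × ℤ) : (L.latticeEquivProd.symm p : ℂ) = (0 : L.lattice) ↔ p = 0 := by
    rw [Subtype.coe_inj, map_eq_zero_iff _ L.latticeEquivProd.symm.injective]
  rw [wp, ← L.weierstrassPExcept_add 0 z, PeriodPair.weierstrassPExcept,
    ← L.latticeEquivProd.symm.toEquiv.tsum_eq, add_comm]
  congr 1
  · refine tsum_congr fun p ↦ ?_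
    simp only [LinearEquiv.coe_toEquiv, hzero]
    simp [hcoe]
  · simp

lemma mul_add_mem_lattice_iff (τ : UpperHalfPlane) (v : ℚ × ℚ) :
    (v.1 * τ + v.2 : ℂ) ∈ (periodPair τ).lattice ↔ IsIntegralRat v.1 ∧ IsIntegralRat v.2 := by
  have hint (r : ℚ) : r.den = 1 ↔ IsIntegralRat r := by
    rw [Rat.den_eq_one_iff, IsIntegralRat]
    exact ⟨fun h ↦ ⟨r.num, h.symm⟩, fun ⟨n, hn⟩ ↦ by simp [hn]⟩
  simpa [periodPair, hint] using
    (periodPair τ).mul_ω₁_add_mul_ω₂_mem_lattice (α := v.1) (β := v.2)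

end Lattice

section Theta

open Filter Topology

/-- The theta function `(e(z); q)_∞ (q e(-z); q)_∞`, where `q = e(τ)`. By the Jacobi triple product
it is the classical `ϑ₁` up to a nowhere vanishing factor, hence has simple zeros exactly at the
points of `ℤτ + ℤ`. -/
def theta (τ z : ℂ) : ℂ := qPochhammer (ec τ) (ec z) * qPochhammer (ec τ) (ec (τ - z))

variable (τ : UpperHalfPlane)

lemma differentiable_theta : Differentiable ℂ (theta τ) := by
  have := differentiable_qPochhammer (norm_ec_lt_one τ)
  have := differentiable_ec
  unfold theta
  fun_prop

lemma theta_eq_one_sub_mul (z : ℂ) : theta τ z =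
    (1 - ec z) * (qPochhammer (ec τ) (ec (τ + z)) * qPochhammer (ec τ) (ec (τ - z))) := by
  rw [theta, qPochhammer_eq_one_sub_mul (norm_ec_lt_one τ), ec_add, mul_assoc]

lemma theta_zero : theta τ 0 = 0 := by
  simp [theta_eq_one_sub_mul, ec_zero]

lemma theta_neg (z : ℂ) : theta τ (-z) = -ec (-z) * theta τ z := by
  have : ec (-z) * ec z = 1 := by rw [← ec_add, neg_add_cancel, ec_zero]
  rw [theta_eq_one_sub_mul, theta_eq_one_sub_mul, ← sub_eq_add_neg, sub_neg_eq_add]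
  linear_combination (-(qPochhammer (ec τ) (ec (τ - z)) * qPochhammer (ec τ) (ec (τ + z)))) * this

lemma theta_add_coe (z : ℂ) : theta τ (z + τ) = theta τ (-z) := by
  rw [theta, theta, mul_comm, sub_neg_eq_add, add_comm z, sub_add_cancel_left]

lemma theta_add_one (z : ℂ) : theta τ (z + 1) = theta τ z := by
  simp [theta, ec_add, ec_sub, ec_one]

lemma theta_ne_zero {z : ℂ} (hz : z ∉ (periodPair τ).lattice) : theta τ z ≠ 0 := by
  have hint {n : ℕ} {x : ℂ} (h : ec τ ^ n * ec x = 1) : ∃ m : ℤ, (n * τ + x : ℂ) = m := by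
    rwa [← ec_natCast_mul, ← ec_add, ec_eq_one_iff] at h
  rw [PeriodPair.mem_lattice, periodPair] at hz
  refine mul_ne_zero (qPochhammer_ne_zero (norm_ec_lt_one τ) fun n hn ↦ hz ?_)
    (qPochhammer_ne_zero (norm_ec_lt_one τ) fun n hn ↦ hz ?_)
  · obtain ⟨m, hm⟩ := hint hn
    exact ⟨-n, m, by push_cast; linear_combination -hm⟩
  · obtain ⟨m, hm⟩ := hint hn
    exact ⟨n + 1, -m, by push_cast; linear_combination hm⟩

lemma hasDerivAt_theta_zero :
    HasDerivAt (theta τ) (-(2 * Real.pi * I) * qPochhammer (ec τ) (ec τ) ^ 2) 0 := by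
  have hfactor : DifferentiableAt ℂ
      (fun z ↦ qPochhammer (ec τ) (ec (τ + z)) * qPochhammer (ec τ) (ec (τ - z))) 0 := by
    have := differentiable_qPochhammer (norm_ec_lt_one τ)
    have := differentiable_ec
    fun_prop
  rw [funext (theta_eq_one_sub_mul τ)]
  refine (((hasDerivAt_ec 0).const_sub 1).mul hfactor.hasDerivAt).congr_deriv ?_
  simp [ec_zero, sq]

lemma deriv_theta_zero_ne_zero : deriv (theta τ) 0 ≠ 0 := by
  rw [(hasDerivAt_theta_zero τ).deriv]
  exact mul_ne_zero (neg_ne_zero.mpr two_pi_I_ne_zero)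
    (pow_ne_zero 2 (qPochhammer_self_ne_zero (norm_ec_lt_one τ)))

/-- The quotient `θ(z + w) θ(z - w) / θ(z)²`: an elliptic function of `z` that vanishes at `±w`
and has at most double poles, at the lattice points. -/
def thetaQuotient (τ w z : ℂ) : ℂ := theta τ (z + w) * theta τ (z - w) / theta τ z ^ 2

lemma thetaQuotient_self (w : ℂ) : thetaQuotient τ w w = 0 := by
  simp [thetaQuotient, theta_zero]

lemma thetaQuotient_even (w : ℂ) : (thetaQuotient τ w).Even := fun z ↦ by
  have hec : ec (-(z + w)) * ec (-(z - w)) = ec (-z) ^ 2 := by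
    rw [sq, ← ec_add, ← ec_add]
    ring_nf
  have hnum : theta τ (-z + w) * theta τ (-z - w) =
      ec (-z) ^ 2 * (theta τ (z + w) * theta τ (z - w)) := by
    rw [← hec, neg_add_eq_sub, ← neg_sub, ← neg_add', theta_neg, theta_neg]
    ring
  rw [thetaQuotient, hnum, theta_neg, neg_mul, neg_sq, mul_pow,
    mul_div_mul_left _ _ (pow_ne_zero 2 (ec_ne_zero _)), thetaQuotient]

lemma thetaQuotient_periodic_coe (w : ℂ) : (thetaQuotient τ w).Periodic τ := fun z ↦ by
  rw [← thetaQuotient_even τ w z, thetaQuotient, thetaQuotient, add_right_comm, add_sub_right_comm,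
    theta_add_coe, theta_add_coe, theta_add_coe, neg_add', neg_sub', sub_neg_eq_add, mul_comm]

lemma thetaQuotient_periodic_one (w : ℂ) : (thetaQuotient τ w).Periodic 1 := fun z ↦ by
  simp only [thetaQuotient, add_right_comm z 1, add_sub_right_comm z 1, theta_add_one]

lemma thetaQuotient_periodic (w : ℂ) {l : ℂ} (hl : l ∈ (periodPair τ).lattice) :
    (thetaQuotient τ w).Periodic l := by
  obtain ⟨m, n, rfl⟩ := PeriodPair.mem_lattice.mp hl
  exact ((thetaQuotient_periodic_coe τ w).int_mul m).add_period
    ((thetaQuotient_periodic_one τ w).int_mul n)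

lemma differentiableOn_thetaQuotient (w : ℂ) :
    DifferentiableOn ℂ (thetaQuotient τ w) ((periodPair τ).lattice : Set ℂ)ᶜ := by
  have := differentiable_theta τ
  unfold thetaQuotient
  exact .div (by fun_prop) (by fun_prop) fun z hz ↦ pow_ne_zero 2 (theta_ne_zero τ hz)

lemma tendsto_sq_mul_thetaQuotient (w : ℂ) :
    Tendsto (fun z ↦ z ^ 2 * thetaQuotient τ w z) (𝓝[≠] 0)
      (𝓝 (theta τ w * theta τ (-w) / deriv (theta τ) 0 ^ 2)) := by
  have hnum : Tendsto (fun z ↦ theta τ (z + w) * theta τ (z - w)) (𝓝[≠] 0)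
      (𝓝 (theta τ w * theta τ (-w))) := by
    have := (differentiable_theta τ).continuous
    have : Continuous fun z ↦ theta τ (z + w) * theta τ (z - w) := by fun_prop
    simpa using this.tendsto' 0 _ rfl |>.mono_left nhdsWithin_le_nhds
  have hden : Tendsto (fun z ↦ z⁻¹ * theta τ z) (𝓝[≠] 0) (𝓝 (deriv (theta τ) 0)) := by
    simpa [theta_zero] using (differentiable_theta τ 0).hasDerivAt.tendsto_slope_zero
  refine (hnum.div (hden.pow 2) (pow_ne_zero 2 (deriv_theta_zero_ne_zero τ))).congr fun z ↦ ?_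
  simp only [thetaQuotient, Pi.div_apply]
  field_simp

theorem weierstrassP_sub_weierstrassP {z w : ℂ} (hz : z ∉ (periodPair τ).lattice)
    (hw : w ∉ (periodPair τ).lattice) :
    (periodPair τ).weierstrassP z - (periodPair τ).weierstrassP w =
      (2 * Real.pi) ^ 2 * qPochhammer (ec τ) (ec τ) ^ 4 * ec w *
        (theta τ (z + w) * theta τ (z - w)) / (theta τ z ^ 2 * theta τ w ^ 2) := by
  have hdiff := sub_eq_mul_weierstrassP_sub (periodPair τ) (thetaQuotient_even τ w)
    (fun _ ↦ thetaQuotient_periodic τ w) (differentiableOn_thetaQuotient τ w)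
    (tendsto_sq_mul_thetaQuotient τ w) hz hw
  have hpi : (2 * Real.pi * I : ℂ) ≠ 0 := two_pi_I_ne_zero
  have hq := qPochhammer_self_ne_zero (norm_ec_lt_one τ)
  have hθz := theta_ne_zero τ hz
  have hθw := theta_ne_zero τ hw
  have hecw := ec_ne_zero w
  have hsq : (2 * Real.pi : ℂ) ^ 2 = -(2 * Real.pi * I) ^ 2 := by
    rw [mul_pow _ I, I_sq, mul_neg_one, neg_neg]
  rw [thetaQuotient_self, sub_zero, thetaQuotient, (hasDerivAt_theta_zero τ).deriv, theta_neg,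
    ec_neg, div_eq_iff (pow_ne_zero 2 hθz)] at hdiff
  rw [hsq, hdiff]
  generalize (2 * Real.pi * I : ℂ) = c at hpi
  field_simp

end Theta

section SiegelFunction

/-- The factor `-e^{πi r₂(r₁ - 1)} q^{(r₁² - r₁ + 1/6)/2}` in front of the product defining
the Siegel function `g_v`. -/
def siegelPrefactor (v : ℚ × ℚ) (τ : ℂ) : ℂ :=
  -exp (Real.pi * I * (v.2 : ℂ) * ((v.1 : ℂ) - 1)) *
    qpow τ ((1 / 2) * (v.1 ^ 2 - v.1 + 1 / 6))

lemma siegelPrefactor_ne_zero (v : ℚ × ℚ) (τ : ℂ) : siegelPrefactor v τ ≠ 0 :=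
  mul_ne_zero (neg_ne_zero.mpr (exp_ne_zero _)) (exp_ne_zero _)

lemma siegelPrefactor_add_mul_siegelPrefactor_sub (u v : ℚ × ℚ) (τ : ℂ) :
    siegelPrefactor (u + v) τ * siegelPrefactor (u - v) τ * Function.Periodic.qParam 24 τ ^ 4 =
      siegelPrefactor u τ ^ 2 * siegelPrefactor v τ ^ 2 * ec (v.1 * τ + v.2) := by
  simp only [siegelPrefactor, qpow, ec, Function.Periodic.qParam, neg_mul, neg_sq, mul_neg,
    neg_neg, ← exp_nat_mul, ← exp_add, Prod.fst_add, Prod.snd_add, Prod.fst_sub, Prod.snd_sub]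
  congr 1
  push_cast
  ring

lemma qpow_mul_ec (τ : ℂ) (r s : ℚ) : qpow τ r * ec s = ec (r * τ + s) := by
  rw [ec_add, qpow, ec, mul_assoc]
  rfl

lemma siegel_eq_siegelPrefactor_mul_theta (v : ℚ × ℚ) (τ : UpperHalfPlane) :
    siegel v τ = siegelPrefactor v τ * theta τ (v.1 * τ + v.2) := by
  have hq := norm_ec_lt_one τ
  set z : ℂ := v.1 * τ + v.2 with hz
  have hzero : qpow τ v.1 * ec v.2 = ec z := qpow_mul_ec τ v.1 v.2
  have hpos (n : ℕ) : qpow τ (n + 1 + v.1) * ec v.2 = ec τ ^ n * (ec τ * ec z) := by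
    rw [qpow_mul_ec, ← ec_natCast_mul, ← ec_add, ← ec_add, hz]
    push_cast
    ring_nf
  have hneg (n : ℕ) : qpow τ (n + 1 - v.1) * ec (-v.2) = ec τ ^ n * ec (τ - z) := by
    rw [← Rat.cast_neg, qpow_mul_ec, ← ec_natCast_mul, ← ec_add, hz]
    push_cast
    ring_nf
  simp only [siegel, hzero, hpos, hneg]
  rw [(multipliable_one_sub_pow_mul hq _).tprod_mul (multipliable_one_sub_pow_mul hq _), theta,
    qPochhammer_eq_one_sub_mul hq (ec z), siegelPrefactor, qPochhammer, qPochhammer]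
  ring

lemma eta_eq_qParam_mul_qPochhammer (τ : ℂ) :
    ModularForm.eta τ = Function.Periodic.qParam 24 τ * qPochhammer (ec τ) (ec τ) := by
  simp_rw [ModularForm.eta, ModularForm.eta_q_eq_pow, pow_succ, qPochhammer, ec]

theorem wp_sub_wp_eq_siegel {u v : ℚ × ℚ} (hu : ¬(IsIntegralRat u.1 ∧ IsIntegralRat u.2))
    (hv : ¬(IsIntegralRat v.1 ∧ IsIntegralRat v.2)) (τ : UpperHalfPlane) :
    wp τ (u.1 * τ + u.2) - wp τ (v.1 * τ + v.2) =
      (2 * Real.pi) ^ 2 * ModularForm.eta τ ^ 4 * (siegel (u + v) τ * siegel (u - v) τ) /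
        (siegel u τ ^ 2 * siegel v τ ^ 2) := by
  rw [← mul_add_mem_lattice_iff τ] at hu hv
  have hK := siegelPrefactor_add_mul_siegelPrefactor_sub u v τ
  set z : ℂ := u.1 * τ + u.2 with hz
  set w : ℂ := v.1 * τ + v.2 with hw
  have hadd : (↑(u + v).1 * τ + ↑(u + v).2 : ℂ) = z + w := by
    push_cast [Prod.fst_add, Prod.snd_add, hz, hw]
    ring
  have hsub : (↑(u - v).1 * τ + ↑(u - v).2 : ℂ) = z - w := by
    push_cast [Prod.fst_sub, Prod.snd_sub, hz, hw]
    ring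
  have hKu := siegelPrefactor_ne_zero u τ
  have hKv := siegelPrefactor_ne_zero v τ
  have hθu := theta_ne_zero τ hu
  have hθv := theta_ne_zero τ hv
  rw [wp_eq_weierstrassP, wp_eq_weierstrassP, weierstrassP_sub_weierstrassP τ hu hv]
  simp only [siegel_eq_siegelPrefactor_mul_theta, hadd, hsub, ← hz, ← hw,
    eta_eq_qParam_mul_qPochhammer]
  rw [div_eq_div_iff (by simp [hθu, hθv]) (by simp [hKu, hKv, hθu, hθv])]
  linear_combination (-(2 * Real.pi) ^ 2 * qPochhammer (ec τ) (ec τ) ^ 4 *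
    (theta τ (z + w) * theta τ (z - w)) * (theta τ z ^ 2 * theta τ w ^ 2)) * hK

end SiegelFunction

section Discriminant

lemma riemannZeta_six : riemannZeta 6 = Real.pi ^ 6 / 945 := by
  have hB : bernoulli 6 = 1 / 42 := by
    rw [bernoulli_eq_bernoulli'_of_ne_one (by norm_num), bernoulli'_def]
    norm_num [Finset.sum_range_succ, Nat.choose,
      bernoulli'_eq_zero_of_odd (n := 5) (by decide) (by norm_num)]
  have := riemannZeta_two_mul_nat (k := 3) (by norm_num)
  norm_num [hB, Nat.factorial] at this
  rw [this]
  ring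

open EisensteinSeries in
lemma tsum_lattice_inv_pow_eq {k : ℕ} (hk : 3 ≤ k) (τ : UpperHalfPlane) :
    (∑' p : ℤ × ℤ, if p = 0 then 0 else ((p.1 : ℂ) * τ + p.2)⁻¹ ^ k) =
      2 * riemannZeta k * ModularForm.E hk τ := by
  have hE : ModularForm.E hk τ = (1 / 2 : ℂ) * eisensteinSeriesSIF (N := 1) 0 k τ := rfl
  have hsum : (∑' p : ℤ × ℤ, if p = 0 then 0 else ((p.1 : ℂ) * τ + p.2)⁻¹ ^ k) =
      ∑' v : Fin 2 → ℤ, eisSummand k v τ := by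
    rw [← (finTwoArrowEquiv ℤ).symm.tsum_eq]
    refine tsum_congr fun p ↦ ?_
    split_ifs with hp
    · simp [hp, eisSummand, (show k ≠ 0 by lia)]
    · simp [eisSummand]
  rw [hsum, tsum_eisSummand_eq_riemannZeta_mul_eisensteinSeries hk τ, hE,
    eisensteinSeriesSIF_apply 0 k τ]
  ring

theorem disc_eq_eta_pow (τ : UpperHalfPlane) :
    disc τ = (2 * Real.pi) ^ 12 * ModularForm.eta τ ^ 24 := by
  have h4 := tsum_lattice_inv_pow_eq (show 3 ≤ 4 by norm_num) τ
  have h6 := tsum_lattice_inv_pow_eq (show 3 ≤ 6 by norm_num) τ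
  have hΔ := ModularForm.discriminant_eq_E₄_cube_sub_E₆_sq τ
  rw [ModularForm.discriminant] at hΔ
  simp only [Nat.cast_ofNat, riemannZeta_four, riemannZeta_six] at h4 h6
  rw [disc, g2, g3, h4, h6, hΔ]
  ring

lemma disc_ne_zero (τ : UpperHalfPlane) : disc τ ≠ 0 := by
  rw [disc_eq_eta_pow]
  exact mul_ne_zero (pow_ne_zero 12 (by simp))
    (pow_ne_zero 24 (ModularForm.eta_ne_zero τ.im_pos))

lemma jInv_sub_eq_div {τ : ℂ} (h : disc τ ≠ 0) :
    jInv τ - 1728 = 1728 * 27 * g3 τ ^ 2 / disc τ := by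
  rw [jInv, eq_div_iff h, sub_mul, div_mul_cancel₀ _ h, disc]
  ring

lemma jInv_sq_mul_sub_pow_three_div_eq {τ : ℂ} (h : disc τ ≠ 0) :
    jInv τ ^ 2 * (jInv τ - 1728) ^ 3 / (2 ^ 30 * 3 ^ 24) =
      (g2 τ * g3 τ / disc τ) ^ 6 * disc τ := by
  rw [jInv_sub_eq_div h, jInv]
  field_simp
  ring

end Discriminant

theorem fricke_sub_pow_six_general (u v : ℚ × ℚ)
    (hu : ¬(IsIntegralRat u.1 ∧ IsIntegralRat u.2))
    (hv : ¬(IsIntegralRat v.1 ∧ IsIntegralRat v.2)) :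
    ∀ τ : ℂ, 0 < τ.im →
      (fricke u τ - fricke v τ) ^ 6 =
        jInv τ ^ 2 * (jInv τ - 1728) ^ 3 / (2 ^ 30 * 3 ^ 24) *
          (siegel (u + v) τ ^ 6 * siegel (u - v) τ ^ 6) /
          (siegel u τ ^ 12 * siegel v τ ^ 12) := by
  intro τ hτ
  lift τ to UpperHalfPlane using hτ
  calc (fricke u τ - fricke v τ) ^ 6
      = (g2 τ * g3 τ / disc τ) ^ 6 *
          (wp τ (u.1 * τ + u.2) - wp τ (v.1 * τ + v.2)) ^ 6 := by
        rw [fricke, fricke, ← mul_sub, mul_pow]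
    _ = (g2 τ * g3 τ / disc τ) ^ 6 * ((2 * Real.pi) ^ 12 * ModularForm.eta τ ^ 24) *
          (siegel (u + v) τ ^ 6 * siegel (u - v) τ ^ 6) /
          (siegel u τ ^ 12 * siegel v τ ^ 12) := by
        rw [wp_sub_wp_eq_siegel hu hv]
        ring
    _ = jInv τ ^ 2 * (jInv τ - 1728) ^ 3 / (2 ^ 30 * 3 ^ 24) *
          (siegel (u + v) τ ^ 6 * siegel (u - v) τ ^ 6) /
          (siegel u τ ^ 12 * siegel v τ ^ 12) := by
        rw [← disc_eq_eta_pow, ← jInv_sq_mul_sub_pow_three_div_eq (disc_ne_zero τ)]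

/-- Lemma 2.1: for `u, v ∈ (ℚ∖ℤ)²` with `u ≢ ±v (mod ℤ²)`,
`(f_u(τ) − f_v(τ))⁶ = j(τ)²(j(τ)−1728)³/(2³⁰·3²⁴) · g_{u+v}⁶ g_{u−v}⁶ / (g_u¹² g_v¹²)`. -/
theorem fricke_sub_pow_six (u v : ℚ × ℚ)
    (hu : ¬IsIntegralRat u.1 ∧ ¬IsIntegralRat u.2)
    (hv : ¬IsIntegralRat v.1 ∧ ¬IsIntegralRat v.2)
    (huv : ¬CongModZ2 u v ∧ ¬CongModZ2 u (-v)) :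
    ∀ τ : ℂ, 0 < τ.im →
      (fricke u τ - fricke v τ) ^ 6 =
        jInv τ ^ 2 * (jInv τ - 1728) ^ 3 / (2 ^ 30 * 3 ^ 24) *
          (siegel (u + v) τ ^ 6 * siegel (u - v) τ ^ 6) /
          (siegel u τ ^ 12 * siegel v τ ^ 12) :=
  fricke_sub_pow_six_general u v (fun h ↦ hu.1 h.1) (fun h ↦ hv.1 h.1)
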